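/- In any execution of algorithm Greedy on an arrival sequence with maximum burst size b, for every frame f and every ℓ ∈ {1,...,k}, the total number of frames mapped (directly or indirectly) by the mapping ψ to f via the ℓ-th packet p_ℓ ∈ f is at most b·(1+b)^{ℓ−1}. -/

import Mathlib

/-! ## Model: d-uniform bounded-delay goodput ({\sc d-uBDG}) instances -/

/-- An arrival sequence for the `d`-uniform bounded-delay goodput problem:
`n` frames, each consisting of `k` unit-size packets; packet `(f, ℓ)` (the `ℓ`-th
packet of frame `f`, `0`-indexed) arrives at time `a f ℓ`, arrival times are
nondecreasing within each frame, and every packet has deadline `a f ℓ + d`. -/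
structure ArrivalSeq (n k d : ℕ) where
  a : Fin n → Fin k → ℕ
  mono : ∀ f : Fin n, Monotone (a f)

namespace ArrivalSeq

variable {n k d : ℕ}

/-- At most `b` packets arrive in any single time slot (maximum burst size `b`). -/
def BurstBound (A : ArrivalSeq n k d) (b : ℕ) : Prop :=
  ∀ t : ℕ, Set.ncard {p : Fin n × Fin k | A.a p.1 p.2 = t} ≤ b

/-- A feasible schedule: at most one packet is delivered per time slot, every packet is
delivered at most once, and every delivered packet is delivered between its arrival
time and its deadline. -/
def IsSchedule (A : ArrivalSeq n k d) (S : ℕ → Option (Fin n × Fin k)) : Prop :=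
  (∀ (p : Fin n × Fin k) (t t' : ℕ), S t = some p → S t' = some p → t = t') ∧
  ∀ (p : Fin n × Fin k) (t : ℕ), S t = some p →
    A.a p.1 p.2 ≤ t ∧ t ≤ A.a p.1 p.2 + d

/-- A frame is successful under schedule `S` if all of its packets are delivered. -/
def Successful (A : ArrivalSeq n k d) (S : ℕ → Option (Fin n × Fin k)) (f : Fin n) : Prop :=
  ∀ ℓ : Fin k, ∃ t : ℕ, S t = some (f, ℓ)

/-- The goodput of a schedule: the number of successful frames. -/
noncomputable def Goodput (A : ArrivalSeq n k d) (S : ℕ → Option (Fin n × Fin k)) : ℕ :=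
  Set.ncard {f : Fin n | A.Successful S f}

/-- `S` is an optimal (feasible) schedule for `A`. -/
def IsOptimal (A : ArrivalSeq n k d) (S : ℕ → Option (Fin n × Fin k)) : Prop :=
  A.IsSchedule S ∧
    ∀ S' : ℕ → Option (Fin n × Fin k), A.IsSchedule S' → A.Goodput S' ≤ A.Goodput S

end ArrivalSeq

/-! ## Executions of scheduling algorithms -/

/-- A trace of the execution of a scheduling algorithm on the arrival sequence `A`:
`deliver t` is the packet delivered at the scheduling substep of slot `t` (if any), and
`dropTime p` is the slot at which packet `p` is dropped by the algorithm (if ever). -/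
structure AlgExec {n k d : ℕ} (A : ArrivalSeq n k d) where
  deliver : ℕ → Option (Fin n × Fin k)
  dropTime : Fin n × Fin k → Option ℕ

namespace AlgExec

variable {n k d : ℕ} {A : ArrivalSeq n k d}

/-- packet `p` is delivered at some time `≤ t`. -/
def DeliveredBy (E : AlgExec A) (p : Fin n × Fin k) (t : ℕ) : Prop :=
  ∃ s ≤ t, E.deliver s = some p

/-- packet `p` is delivered at some point of the execution. -/
def Delivered (E : AlgExec A) (p : Fin n × Fin k) : Prop :=
  ∃ s : ℕ, E.deliver s = some p

/-- packet `p` is dropped at some time `< t`. -/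
def DroppedBefore (E : AlgExec A) (p : Fin n × Fin k) (t : ℕ) : Prop :=
  ∃ s < t, E.dropTime p = some s

/-- packet `p` is pending at (the scheduling substep of) slot `t`: it has arrived, its
deadline has not passed, and it has been neither delivered nor dropped before `t`. -/
def Pending (E : AlgExec A) (p : Fin n × Fin k) (t : ℕ) : Prop :=
  A.a p.1 p.2 ≤ t ∧ t ≤ A.a p.1 p.2 + d ∧
    ¬ (∃ s < t, E.deliver s = some p) ∧ ¬ E.DroppedBefore p t

/-- frame `f` is alive at time `t`: none of its packets has been dropped before `t`,
nor has expired (i.e., reached its deadline undelivered) before `t`. -/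
def Alive (E : AlgExec A) (f : Fin n) (t : ℕ) : Prop :=
  ∀ ℓ : Fin k, ¬ E.DroppedBefore (f, ℓ) t ∧
    (A.a f ℓ + d < t → E.DeliveredBy (f, ℓ) (A.a f ℓ + d))

/-- frame `f` has some pending packet at time `t`. -/
def HasPending (E : AlgExec A) (f : Fin n) (t : ℕ) : Prop :=
  ∃ ℓ : Fin k, E.Pending (f, ℓ) t

/-- `I_t(f)`: the index of the first (minimal-index) pending packet of `f` at time `t`. -/
noncomputable def Iidx (E : AlgExec A) (t : ℕ) (f : Fin n) : ℕ :=
  sInf {ℓ : ℕ | ∃ h : ℓ < k, E.Pending (f, ⟨ℓ, h⟩) t}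

/-- frame `f` is completed by the execution: all of its packets are delivered. -/
def Completed (E : AlgExec A) (f : Fin n) : Prop :=
  ∀ ℓ : Fin k, E.Delivered (f, ℓ)

/-- `w f`: the number of packets of frame `f` delivered by the execution. -/
noncomputable def w (E : AlgExec A) (f : Fin n) : ℕ :=
  Set.ncard {ℓ : Fin k | E.Delivered (f, ℓ)}

/-- the first time at which some packet of `f` is dropped. -/
noncomputable def dropT (E : AlgExec A) (f : Fin n) : ℕ :=
  sInf {t : ℕ | ∃ ℓ : Fin k, E.dropTime (f, ℓ) = some t}

/-- the index of the first packet of `f` to be dropped (the minimal index among the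
packets of `f` dropped at the first drop time of `f`). -/
noncomputable def firstDropIdx (E : AlgExec A) (f : Fin n) : ℕ :=
  sInf {ℓ : ℕ | ∃ h : ℓ < k, E.dropTime (f, ⟨ℓ, h⟩) = some (E.dropT f)}

/-! ### The algorithm `ProactiveGreedy` -/

/-- The defining conditions of an execution of `ProactiveGreedy` (with arbitrary
tie-breaking): at every slot `t`,
(i) a delivered packet is the first pending packet of an alive frame maximizing
`I_t` among all alive frames with pending packets;
(ii) a packet is delivered whenever some alive frame has a pending packet; and
(iii) a packet is dropped at `t` exactly when it is pending at `t` and either its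
frame is not alive at `t` (line 1 of the algorithm) or the packet delivered at `t`
belongs to a different frame (line 4: packets of all non-chosen frames are dropped). -/
def PGValid (E : AlgExec A) : Prop :=
  (∀ (t : ℕ) (f : Fin n) (ℓ : Fin k), E.deliver t = some (f, ℓ) →
      E.Alive f t ∧ E.Pending (f, ℓ) t ∧ (ℓ : ℕ) = E.Iidx t f ∧
      ∀ f' : Fin n, E.Alive f' t → E.HasPending f' t → E.Iidx t f' ≤ E.Iidx t f) ∧
  (∀ t : ℕ, (∃ f : Fin n, E.Alive f t ∧ E.HasPending f t) → E.deliver t ≠ none) ∧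
  (∀ (p : Fin n × Fin k) (t : ℕ), E.dropTime p = some t ↔
      E.Pending p t ∧
        (¬ E.Alive p.1 t ∨ ∃ q : Fin n × Fin k, E.deliver t = some q ∧ q.1 ≠ p.1))

/-! ### The mapping `φ` used in the analysis of `ProactiveGreedy` -/

open Classical in
/-- The frame onto which a frame `f ∉ F_PG` is *directly* mapped by the mapping `φ`:
the frame whose packet is delivered at the time `t_f` at which the first packet of `f`
is dropped.  Frames of `F_PG` are mapped to themselves. -/
noncomputable def phiNext (E : AlgExec A) (f : Fin n) : Fin n :=
  if E.Completed f then f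
  else
    match E.deliver (E.dropT f) with
    | some q => q.1
    | none => f

/-- the frame onto which `f` is mapped after `j` successive (re-)mappings of `φ`. -/
noncomputable def phiChain (E : AlgExec A) (f : Fin n) (j : ℕ) : Fin n :=
  (E.phiNext)^[j] f

/-- frame `f` is *directly* mapped by `φ` via the packet `q` (of the frame `q.1`):
`q` is the packet delivered at the time the first packet of `f` is dropped. -/
def PhiDirectVia (E : AlgExec A) (f : Fin n) (q : Fin n × Fin k) : Prop :=
  ¬ E.Completed f ∧ E.deliver (E.dropT f) = some q

/-- frame `f` is mapped (directly or indirectly, i.e. after re-mappings) by `φ`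
via the packet `q`; `M(q)` is the set of frames mapped via `q`. -/
def PhiMappedVia (E : AlgExec A) (f : Fin n) (q : Fin n × Fin k) : Prop :=
  ∃ j : ℕ, E.PhiDirectVia (E.phiChain f j) q

/-! ### The algorithm `Greedy` -/

/-- packet `p` is still pending after the scheduling substep of slot `t`. -/
def PendingAfter (E : AlgExec A) (p : Fin n × Fin k) (t : ℕ) : Prop :=
  E.Pending p t ∧ E.deliver t ≠ some p

/-- frame `f` is infeasible after the scheduling substep of slot `t`: for some pending
packet `(f, ℓ)` the pending packets of `f` of index `≤ ℓ` cannot all be scheduled in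
the slots `t+1, …, a f ℓ + d`. -/
noncomputable def Infeasible (E : AlgExec A) (f : Fin n) (t : ℕ) : Prop :=
  ∃ ℓ : Fin k, E.PendingAfter (f, ℓ) t ∧
    A.a f ℓ + d < t + Set.ncard {j : Fin k | j ≤ ℓ ∧ E.PendingAfter (f, j) t}

/-- The defining conditions of an execution of `Greedy` (with arbitrary tie-breaking):
at every slot `t`,
(i) a delivered packet is the first pending packet of an alive frame maximizing `I_t`
among all alive frames with pending packets;
(ii) a packet is delivered whenever some alive frame has a pending packet; and
(iii) a packet is dropped at `t` exactly when it is pending at `t`, it is not the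
packet delivered at `t`, and either its frame is not alive at `t`, or its residual
slack at `t` is `0` (it expires), or its frame becomes infeasible at `t` (cleanup). -/
noncomputable def GreedyValid (E : AlgExec A) : Prop :=
  (∀ (t : ℕ) (f : Fin n) (ℓ : Fin k), E.deliver t = some (f, ℓ) →
      E.Alive f t ∧ E.Pending (f, ℓ) t ∧ (ℓ : ℕ) = E.Iidx t f ∧
      ∀ f' : Fin n, E.Alive f' t → E.HasPending f' t → E.Iidx t f' ≤ E.Iidx t f) ∧
  (∀ t : ℕ, (∃ f : Fin n, E.Alive f t ∧ E.HasPending f t) → E.deliver t ≠ none) ∧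
  (∀ (p : Fin n × Fin k) (t : ℕ), E.dropTime p = some t ↔
      E.Pending p t ∧ E.deliver t ≠ some p ∧
        (¬ E.Alive p.1 t ∨ A.a p.1 p.2 + d = t ∨ E.Infeasible p.1 t))

/-- packet `p = (f, ℓ)` is *eligible* at time `t`: it is in the buffer (pending) at
`t`, its frame is alive at `t`, and `ℓ = I_t(f)`. -/
def Eligible (E : AlgExec A) (p : Fin n × Fin k) (t : ℕ) : Prop :=
  E.Alive p.1 t ∧ E.Pending p t ∧ (p.2 : ℕ) = E.Iidx t p.1

/-! ### The mapping `ψ` used in the analysis of `Greedy` -/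

/-- The mapping `ψ` used in the analysis of `Greedy`, relative to the set `O` of frames
of a fixed optimal schedule and the maximum burst size `b`.  Every frame of
`F_G` (completed by `Greedy`) is mapped to itself (encoded as `dm f = none`); every
frame `f ∉ F_G` is directly mapped via a packet `q` delivered by `Greedy` no later than
the drop time `t_f` of `f`, whose index is at least the index of the first dropped
packet of `f`; every delivered packet has at most `2` frames of `O` and at most `b`
frames in total directly mapped to it. -/
structure PsiMapping (E : AlgExec A) (O : Set (Fin n)) (b : ℕ) where
  dm : Fin n → Option (Fin n × Fin k)
  mapsSelf : ∀ f : Fin n, E.Completed f → dm f = none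
  mapsAll : ∀ f : Fin n, ¬ E.Completed f → ∃ q : Fin n × Fin k, dm f = some q
  viaValid : ∀ (f : Fin n) (q : Fin n × Fin k), dm f = some q →
    E.firstDropIdx f ≤ (q.2 : ℕ) ∧ ∃ t ≤ E.dropT f, E.deliver t = some q
  capO : ∀ q : Fin n × Fin k, Set.ncard {f : Fin n | f ∈ O ∧ dm f = some q} ≤ 2
  capAll : ∀ q : Fin n × Fin k, Set.ncard {f : Fin n | dm f = some q} ≤ b

namespace PsiMapping

variable {E : AlgExec A} {O : Set (Fin n)} {b : ℕ}

/-- the frame onto which `f` is directly mapped by `ψ` (itself, if `f ∈ F_G`). -/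
def next (M : PsiMapping E O b) (f : Fin n) : Fin n :=
  match M.dm f with
  | some q => q.1
  | none => f

/-- the frame onto which `f` is mapped after `j` successive (re-)mappings of `ψ`. -/
def chain (M : PsiMapping E O b) (f : Fin n) (j : ℕ) : Fin n :=
  (M.next)^[j] f

/-- frame `f` is mapped (directly or indirectly) by `ψ` via the packet `q`;
`M(q)` is the set of frames mapped via `q`. -/
def MappedVia (M : PsiMapping E O b) (f : Fin n) (q : Fin n × Fin k) : Prop :=
  ∃ j : ℕ, M.dm (M.chain f j) = some q

end PsiMapping

end AlgExec

/-!
Greedy delivers the first pending packet of an alive frame and arrival times are nondecreasing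
within a frame, so every delivered packet of a frame precedes all its dropped packets. As `ψ` maps a
frame via a packet whose index is at least that of its first dropped packet, the indices of the
packets used by successive re-mappings strictly increase. Hence a frame mapped via `q` is one of the
at most `b` frames `g` directly mapped via `q`, or was mapped earlier to such a `g` via a packet of
smaller index. By induction on `i`, at most `(1 + b) ^ i` frames are equal to `g` or mapped to `g`
via a packet of index less than `i`.
-/

section Counting

variable {α : Type*}

theorem encard_biUnion_le_mul {ι : Type*} {s : Set ι} {t : ι → Set α} {c : ℕ∞}
    (ht : ∀ i ∈ s, (t i).encard ≤ c) : (⋃ i ∈ s, t i).encard ≤ s.encard * c := by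
  rcases s.finite_or_infinite with hs | hs
  · lift s to Finset ι using hs
    calc (⋃ i ∈ s, t i).encard ≤ ∑ i ∈ s, (t i).encard := s.set_encard_biUnion_le t
      _ ≤ s.card • c := Finset.sum_le_card_nsmul s _ c ht
      _ = (s : Set ι).encard * c := by rw [Set.encard_coe_eq_coe_finsetCard, nsmul_eq_mul]
  · rcases eq_or_ne c 0 with rfl | hc
    · simp_all
    · simp [hs.encard_eq, ENat.top_mul hc]

variable {k : ℕ} {direct mapped : α → Fin k → Set α} {b : ℕ∞}

theorem encard_le_mul_of_subset_biUnion {g : α} {i : Fin k} {c : ℕ∞}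
    (hd : (direct g i).encard ≤ b)
    (hm : mapped g i ⊆ ⋃ h ∈ direct g i, insert h (⋃ j < i, mapped h j))
    (hc : ∀ h, (insert h (⋃ j < i, mapped h j)).encard ≤ c) :
    (mapped g i).encard ≤ b * c :=
  calc (mapped g i).encard ≤ (⋃ h ∈ direct g i, insert h (⋃ j < i, mapped h j)).encard :=
        Set.encard_le_encard hm
    _ ≤ (direct g i).encard * c := encard_biUnion_le_mul fun h _ ↦ hc h
    _ ≤ b * c := by gcongr

theorem encard_insert_iUnion_le_pow (hd : ∀ g i, (direct g i).encard ≤ b)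
    (hm : ∀ g i, mapped g i ⊆ ⋃ h ∈ direct g i, insert h (⋃ j < i, mapped h j))
    (g : α) (m : ℕ) :
    (insert g (⋃ (j : Fin k) (_ : (j : ℕ) < m), mapped g j)).encard ≤ (1 + b) ^ m := by
  induction m generalizing g with
  | zero => simp
  | succ m ih =>
    set below := insert g (⋃ (j : Fin k) (_ : (j : ℕ) < m), mapped g j)
    set level := ⋃ (j : Fin k) (_ : (j : ℕ) = m), mapped g j
    have hsplit : insert g (⋃ (j : Fin k) (_ : (j : ℕ) < m + 1), mapped g j) = below ∪ level := by
      simp only [below, level, Set.insert_union, Order.lt_add_one_iff, le_iff_lt_or_eq,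
        Set.iUnion_or, Set.iUnion_union_distrib]
    have hlevel : level.encard ≤ b * (1 + b) ^ m := by
      by_cases hk : m < k
      · have : level = mapped g ⟨m, hk⟩ := by
          ext; simp [level, Fin.exists_iff, hk]
        rw [this]
        exact encard_le_mul_of_subset_biUnion (hd g _) (hm g _) ih
      · have : level = ∅ := by
          simp only [level, Set.iUnion_eq_empty]
          omega
        simp [this]
    calc _ = (below ∪ level).encard := by rw [hsplit]
      _ ≤ below.encard + level.encard := Set.encard_union_le _ _
      _ ≤ (1 + b) ^ m + b * (1 + b) ^ m := add_le_add (ih g) hlevel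
      _ = (1 + b) ^ (m + 1) := by ring

theorem encard_le_mul_pow_of_subset_biUnion (hd : ∀ g i, (direct g i).encard ≤ b)
    (hm : ∀ g i, mapped g i ⊆ ⋃ h ∈ direct g i, insert h (⋃ j < i, mapped h j))
    (g : α) (i : Fin k) : (mapped g i).encard ≤ b * (1 + b) ^ (i : ℕ) :=
  encard_le_mul_of_subset_biUnion (hd g i) (hm g i)
    fun h ↦ encard_insert_iUnion_le_pow hd hm h i

end Counting

namespace AlgExec

variable {n k d : ℕ} {A : ArrivalSeq n k d} {E : AlgExec A}

theorem exists_dropTime_dropT {f : Fin n} {ℓ : Fin k} {t : ℕ} (h : E.dropTime (f, ℓ) = some t) :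
    ∃ m, E.dropTime (f, m) = some (E.dropT f) :=
  Nat.sInf_mem (s := {t | ∃ m, E.dropTime (f, m) = some t}) ⟨t, ℓ, h⟩

theorem exists_val_eq_firstDropIdx {f : Fin n} {ℓ : Fin k} {t : ℕ}
    (h : E.dropTime (f, ℓ) = some t) :
    ∃ m : Fin k, (m : ℕ) = E.firstDropIdx f ∧ E.dropTime (f, m) = some (E.dropT f) := by
  obtain ⟨m, hm⟩ := exists_dropTime_dropT h
  obtain ⟨hlt, hdrop⟩ := Nat.sInf_mem
    (s := {i | ∃ hi : i < k, E.dropTime (f, ⟨i, hi⟩) = some (E.dropT f)}) ⟨m, m.isLt, hm⟩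
  exact ⟨⟨_, hlt⟩, rfl, hdrop⟩

theorem Pending.of_le {p : Fin n × Fin k} {s t : ℕ} (h : E.Pending p t) (ha : A.a p.1 p.2 ≤ s)
    (hst : s ≤ t) : E.Pending p s := by
  obtain ⟨-, hdeadline, hnotDelivered, hnotDropped⟩ := h
  exact ⟨ha, hst.trans hdeadline,
    fun ⟨u, hu, h⟩ ↦ hnotDelivered ⟨u, hu.trans_le hst, h⟩,
    fun ⟨u, hu, h⟩ ↦ hnotDropped ⟨u, hu.trans_le hst, h⟩⟩

theorem Iidx_le {f : Fin n} {ℓ : Fin k} {t : ℕ} (h : E.Pending (f, ℓ) t) : E.Iidx t f ≤ ℓ :=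
  Nat.sInf_le ⟨ℓ.isLt, h⟩

namespace GreedyValid

theorem exists_dropTime_of_not_delivered (hE : E.GreedyValid) {p : Fin n × Fin k}
    (hp : ¬ E.Delivered p) : ∃ t, E.dropTime p = some t := by
  by_contra hdrop
  -- A packet neither delivered nor dropped earlier is dropped when it expires.
  have hpending : E.Pending p (A.a p.1 p.2 + d) :=
    ⟨Nat.le_add_right _ _, le_rfl, fun ⟨s, _, hs⟩ ↦ hp ⟨s, hs⟩, fun ⟨s, _, hs⟩ ↦ hdrop ⟨s, hs⟩⟩
  exact hdrop ⟨_, (hE.2.2 p _).2 ⟨hpending, fun h ↦ hp ⟨_, h⟩, .inr (.inl rfl)⟩⟩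

theorem deliver_ne_of_dropTime (hE : E.GreedyValid) {p : Fin n × Fin k} {s t : ℕ}
    (hdrop : E.dropTime p = some t) (hst : s ≤ t) : E.deliver s ≠ some p := by
  obtain ⟨⟨-, -, hbefore, -⟩, hat, -⟩ := (hE.2.2 p t).1 hdrop
  rcases hst.lt_or_eq with hlt | rfl
  exacts [fun h ↦ hbefore ⟨s, hlt, h⟩, hat]

theorem lt_of_delivered_of_dropTime (hE : E.GreedyValid) {f : Fin n} {j ℓ : Fin k} {t : ℕ}
    (hj : E.Delivered (f, j)) (hℓ : E.dropTime (f, ℓ) = some t) : j < ℓ := by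
  obtain ⟨s, hs⟩ := hj
  obtain ⟨halive, hpending, hfirst, -⟩ := hE.1 s f j hs
  have hst : s ≤ t := not_lt.1 fun hts ↦ (halive ℓ).1 ⟨t, hts, hℓ⟩
  by_contra! hle
  have hℓpending : E.Pending (f, ℓ) s :=
    ((hE.2.2 _ t).1 hℓ).1.of_le ((A.mono f hle).trans hpending.1) hst
  have heq : j = ℓ := le_antisymm (Fin.le_def.2 (hfirst ▸ Iidx_le hℓpending)) hle
  exact hE.deliver_ne_of_dropTime hℓ hst (heq ▸ hs)

theorem lt_firstDropIdx_of_delivered (hE : E.GreedyValid) {f : Fin n} (hf : ¬ E.Completed f)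
    {j : Fin k} (hj : E.Delivered (f, j)) : (j : ℕ) < E.firstDropIdx f := by
  obtain ⟨ℓ, hℓ⟩ := not_forall.1 hf
  obtain ⟨t, ht⟩ := hE.exists_dropTime_of_not_delivered hℓ
  obtain ⟨m, hm, hdrop⟩ := exists_val_eq_firstDropIdx ht
  exact hm ▸ hE.lt_of_delivered_of_dropTime hj hdrop

end GreedyValid

namespace PsiMapping

variable {O : Set (Fin n)} {b : ℕ} {M : PsiMapping E O b} {f : Fin n} {p q : Fin n × Fin k}

theorem not_completed_of_dm (h : M.dm f = some q) : ¬ E.Completed f := fun hf ↦ by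
  simp [M.mapsSelf f hf] at h

theorem delivered_of_dm (h : M.dm f = some q) : E.Delivered q :=
  let ⟨_, t, _, ht⟩ := M.viaValid f q h
  ⟨t, ht⟩

theorem exists_dm_of_dm_next (h : M.dm (M.next f) = some q) :
    ∃ p, M.dm f = some p ∧ p.1 = M.next f := by
  cases hf : M.dm f with
  | none => simp [next, hf] at h
  | some p => exact ⟨p, rfl, by simp [next, hf]⟩

theorem MappedVia.exists_dm (h : M.MappedVia f q) :
    ∃ g, M.dm g = some q ∧ (f = g ∨ ∃ j, M.MappedVia f (g, j)) := by
  obtain ⟨_ | m, hm⟩ := h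
  · exact ⟨f, hm, .inl rfl⟩
  · have hchain : M.chain f (m + 1) = M.next (M.chain f m) := Function.iterate_succ_apply' ..
    obtain ⟨p, hp, hnext⟩ := exists_dm_of_dm_next (hchain ▸ hm)
    exact ⟨M.chain f (m + 1), hm, .inr ⟨p.2, m, by rw [hp, hchain, ← hnext]⟩⟩

theorem snd_lt_snd_of_dm (hE : E.GreedyValid) (hp : M.dm f = some p) (hq : M.dm p.1 = some q) :
    p.2 < q.2 :=
  Fin.lt_def.2 <|
    (hE.lt_firstDropIdx_of_delivered (not_completed_of_dm hq) (delivered_of_dm hp)).trans_le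
      (M.viaValid p.1 q hq).1

theorem setOf_mappedVia_subset (hE : E.GreedyValid) :
    {f | M.MappedVia f q} ⊆
      ⋃ g ∈ {g | M.dm g = some q}, insert g (⋃ j < q.2, {f | M.MappedVia f (g, j)}) := by
  intro f hf
  obtain ⟨g, hg, hfg⟩ := MappedVia.exists_dm hf
  refine Set.mem_biUnion hg (hfg.imp_right fun ⟨j, m, hm⟩ ↦ ?_)
  have hlt : j < q.2 := snd_lt_snd_of_dm hE hm hg
  exact Set.mem_biUnion (s := Set.Iio q.2) hlt ⟨m, hm⟩

end PsiMapping

end AlgExec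

theorem greedy_mapping_load_general {n k d b : ℕ} {A : ArrivalSeq n k d} {E : AlgExec A}
    (hE : E.GreedyValid) {O : Set (Fin n)} (M : AlgExec.PsiMapping E O b) (q : Fin n × Fin k) :
    Set.ncard {f : Fin n | M.MappedVia f q} ≤ b * (1 + b) ^ (q.2 : ℕ) := by
  have hdirect (g : Fin n) (i : Fin k) : {f | M.dm f = some (g, i)}.encard ≤ b :=
    Set.encard_le_coe_iff_finite_ncard_le.2 ⟨Set.toFinite _, M.capAll (g, i)⟩
  have hload : {f | M.MappedVia f q}.encard ≤ b * (1 + b) ^ (q.2 : ℕ) :=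
    encard_le_mul_pow_of_subset_biUnion (mapped := fun g i ↦ {f | M.MappedVia f (g, i)}) hdirect
      (fun _ _ ↦ AlgExec.PsiMapping.setOf_mappedVia_subset hE) q.1 q.2
  exact (Set.encard_le_coe_iff_finite_ncard_le.1 (mod_cast hload)).2

/-- In any execution of `Greedy` on an arrival sequence with maximum
burst size `b`, for every frame and every packet `q` of it of (0-indexed) index
`i = q.2` (the `(i+1)`-st packet of the frame), the total number of frames mapped
(directly or indirectly) by the mapping `ψ` (taken with respect to the set `O` of
frames of a fixed optimal schedule) to that frame via `q` is at most
`b · (1 + b) ^ i`. -/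
theorem greedy_mapping_load (n k d b : ℕ) (hkd : k ≤ d)
    (A : ArrivalSeq n k d) (hburst : A.BurstBound b)
    (E : AlgExec A) (hE : E.GreedyValid)
    (S : ℕ → Option (Fin n × Fin k)) (hS : A.IsOptimal S)
    (M : AlgExec.PsiMapping E {f : Fin n | A.Successful S f} b) :
    ∀ q : Fin n × Fin k,
      Set.ncard {f : Fin n | M.MappedVia f q} ≤ b * (1 + b) ^ (q.2 : ℕ) :=
  greedy_mapping_load_general hE M
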